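/- arXiv:math/0412124 — 2 statements merged into one kernel-verified Lean document; each statement's English description precedes it below -/
import Mathlib

section
/- For every graded poset P of rank at least 1, the ab-index of the Tchebyshev transform satisfies Ψ(T(P)) = T(Ψ(P)·a), where on the left T(P) is the Tchebyshev transform of the poset P and on the right T is the Tchebyshev transform on ab-polynomials. -/
open scoped TensorProduct

noncomputable section

namespace Tcheb

/-! ### The algebra `R⟨a,b⟩` of ab-polynomials -/

/-- Words in the two noncommuting letters `a` (encoded `true`) and `b` (encoded `false`). -/
abbrev ABWord : Type := FreeMonoid Bool

/-- The ring `R⟨a,b⟩` of polynomials in two noncommuting variables `a` and `b`. -/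
abbrev AB (R : Type) [CommRing R] : Type := MonoidAlgebra R ABWord

variable (R : Type) [CommRing R]

/-- The ab-monomial corresponding to a word. -/
def word (l : List Bool) : AB R := MonoidAlgebra.of R ABWord (FreeMonoid.ofList l)

/-- The variable `a`. -/
def av : AB R := word R [true]
/-- The variable `b`. -/
def bv : AB R := word R [false]
/-- `c = a + b`. -/
def cv : AB R := av R + bv R
/-- `d = ab + ba`. -/
def dv : AB R := av R * bv R + bv R * av R
/-- `a - b`. -/
def ev : AB R := av R - bv R

/-- The linear map defined by prescribing values on the basis of ab-monomials. -/
def onBasis {M : Type} [AddCommMonoid M] [Module R M] (f : List Bool → M) :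
    AB R →ₗ[R] M :=
  (Finsupp.lift M R ABWord fun w => f (FreeMonoid.toList w)) ∘ₗ
    (MonoidAlgebra.coeffLinearEquiv R).toLinearMap

/-- The algebra map `A` with `A(a) = 1`, `A(b) = 0`. -/
def Amap : AB R →ₐ[R] R :=
  MonoidAlgebra.lift R R ABWord (FreeMonoid.lift fun x => if x then (1 : R) else 0)

/-- The coproduct on `R⟨a,b⟩`: on an ab-monomial `u₁ ⋯ u_k` it is
`Σ_{i=1}^k u₁ ⋯ u_{i-1} ⊗ u_{i+1} ⋯ u_k`. -/
def Delta : AB R →ₗ[R] AB R ⊗[R] AB R :=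
  onBasis R fun w => ∑ i ∈ Finset.range w.length,
    word R (w.take i) ⊗ₜ[R] word R (w.drop (i + 1))

/-- The linear map `C(u) = 2·A(u) + Σ_u A(u₍₁₎)·A(u₍₂₎)`. -/
def Cmap : AB R →ₗ[R] R :=
  2 • (Amap R).toLinearMap +
    (LinearMap.mul' R R ∘ₗ
      TensorProduct.map (Amap R).toLinearMap (Amap R).toLinearMap) ∘ₗ Delta R

/-- `κ(u) = A(u)·(a-b)^(deg u)` on homogeneous `u`, extended linearly. -/
def kappa : AB R →ₗ[R] AB R :=
  onBasis R fun w => Amap R (word R w) • ev R ^ w.length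

/-- `ν(u) = C(u)·(a-b)^(deg u)` on homogeneous `u`, extended linearly. -/
def nuMap : AB R →ₗ[R] AB R :=
  onBasis R fun w => Cmap R (word R w) • ev R ^ w.length

end Tcheb

namespace Tcheb

/-- Cutting a word into the list of segments between the (sorted) cut positions. -/
def segments : List Bool → List ℕ → List (List Bool)
  | l, [] => [l]
  | l, i :: rest => l.take i :: segments (l.drop (i + 1)) (rest.map fun j => j - (i + 1))
  termination_by _ cuts => cuts.length
  decreasing_by simp

variable (R : Type) [CommRing R]

/-- For segments `[s₁, …, s_k]` this is `ν(s₁)·b·ν(s₂)·b ⋯ b·ν(s_{k-1})·b·κ(s_k)`. -/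
def chainProd : List (List Bool) → AB R
  | [] => 1
  | [s] => kappa R (word R s)
  | s :: rest => nuMap R (word R s) * bv R * chainProd rest

/-- The Tchebyshev transform (of the first kind) on ab-polynomials:
`T(u) = Σ_{k ≥ 1} Σ_u ν(u₍₁₎)·b·ν(u₍₂₎)·b ⋯ b·ν(u₍ₖ₋₁₎)·b·κ(u₍ₖ₎)`,
where the inner sum is over the `k`-fold coproduct.  On the ab-monomial basis this
is the sum, over all sets of positions of deleted letters, of the corresponding
products over the resulting segments. -/
def Tmap : AB R →ₗ[R] AB R :=
  onBasis R fun w => ∑ S : Finset (Fin w.length),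
    chainProd R (segments w ((S.sort (· ≤ ·)).map Fin.val))

/-- The `ω` map on a word: replace each occurrence of `ab` by `2d` and all
remaining letters by `c`. -/
def omegaWord : List Bool → AB R
  | [] => 1
  | true :: false :: rest => (2 * dv R) * omegaWord rest
  | _ :: rest => cv R * omegaWord rest

/-- The `ω` map of Billera–Ehrenborg–Readdy. -/
def omegaMap : AB R →ₗ[R] AB R := onBasis R fun w => omegaWord R w

/-- The reversal involution `u ↦ u*` of ab-polynomials. -/
def revMap : AB R →ₗ[R] AB R := onBasis R fun w => word R w.reverse

/-- `H*(1) = 0` and `H*(u·a) = H*(u·b) = u`. -/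
def Hstar : AB R →ₗ[R] AB R :=
  onBasis R fun w => if w = [] then 0 else word R w.dropLast

/-- The Tchebyshev transform of the second kind `U(u) = H*(T(u·a))`. -/
def Umap : AB R →ₗ[R] AB R := Hstar R ∘ₗ Tmap R ∘ₗ LinearMap.mulRight R (av R)

/-- `σ(u) = Σ_u κ(u₍₁₎)·b·T(u₍₂₎)`. -/
def sigmaMap : AB R →ₗ[R] AB R :=
  LinearMap.mul' R (AB R) ∘ₗ
    TensorProduct.map (LinearMap.mulRight R (bv R) ∘ₗ kappa R) (Tmap R) ∘ₗ Delta R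

/-! ### Graded posets and the ab-index -/

/-- `rk` is a rank function for a bounded poset: `rk ⊥ = 0` and covers raise rank by one. -/
def IsRankFun (α : Type) [PartialOrder α] [OrderBot α] (rk : α → ℕ) : Prop :=
  rk ⊥ = 0 ∧ ∀ x y : α, x ⋖ y → rk y = rk x + 1

/-- `f` lists the elements of a chain in increasing order with respect to the
strict order relation `lt`. -/
def IsStrictChain {α : Type} (lt : α → α → Prop) {n : ℕ} (f : Fin (n + 1) → α) : Prop :=
  ∀ i j : Fin (n + 1), i < j → lt (f i) (f j)

/-- The weight of a chain `x₀ < x₁ < ⋯ < x_k`: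
`(a-b)^{ρ(x₀,x₁)-1}·b·(a-b)^{ρ(x₁,x₂)-1}·b ⋯ b·(a-b)^{ρ(x_{k-1},x_k)-1}`. -/
def chainWt {α : Type} (rk : α → ℕ) {n : ℕ} (f : Fin (n + 1) → α) : AB R :=
  (List.intersperse (bv R)
    (List.ofFn fun i : Fin n => ev R ^ (rk (f i.succ) - rk (f i.castSucc) - 1))).prod

/-- The ab-index `Ψ` of the graded poset with strict order relation `lt`, rank
function `rk`, minimum `b` and maximum `t`: the sum of the weights of all chains
from `b` to `t`. -/
def PsiRel {α : Type} (lt : α → α → Prop) (rk : α → ℕ) (b t : α) : AB R :=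
  ∑ᶠ (n : ℕ), ∑ᶠ (f : Fin (n + 1) → α)
    (_ : IsStrictChain lt f ∧ f 0 = b ∧ f (Fin.last n) = t), chainWt R rk f

end Tcheb

namespace Tcheb

/-! ### The Tchebyshev transform of a graded poset -/

section TPoset

variable (α : Type) [PartialOrder α] [BoundedOrder α]

/-- The elements `[x,y]` of the Tchebyshev transform: intervals of `P ∪ {-1̂}`,
i.e. pairs `(x,y)` with `x ∈ P ∪ {-1̂}`, `y ∈ P` and `x < y`. -/
def TPel : Type := {p : WithBot α × α // p.1 < (p.2 : WithBot α)}

/-- The underlying set of the Tchebyshev transform `T(P)`: the intervals `[x,y]`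
together with a new maximum element (`none`). -/
def TP : Type := Option (TPel α)

/-- The cover relation of the Tchebyshev transform `T(P)`:
`[x,y] ⋖ [y,w]` and `[x,y] ⋖ [x,w]` whenever `y ⋖ w` in `P`, and `[x,1̂] ⋖ 1̂_{T(P)}`. -/
inductive TPcov : TP α → TP α → Prop
  | up {x : WithBot α} {y w : α} (h1 : x < (y : WithBot α))
      (h2 : (y : WithBot α) < (w : WithBot α)) (hc : y ⋖ w) :
      TPcov (some ⟨(x, y), h1⟩) (some ⟨((y : WithBot α), w), h2⟩)
  | same {x : WithBot α} {y w : α} (h1 : x < (y : WithBot α))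
      (h2 : x < (w : WithBot α)) (hc : y ⋖ w) :
      TPcov (some ⟨(x, y), h1⟩) (some ⟨(x, w), h2⟩)
  | top {x : WithBot α} (h1 : x < ((⊤ : α) : WithBot α)) :
      TPcov (some ⟨(x, (⊤ : α)), h1⟩) none

/-- The strict order relation of `T(P)`, generated by the cover relation. -/
def TPlt : TP α → TP α → Prop := Relation.TransGen (TPcov α)

/-- The order relation of `T(P)`, generated by the cover relation. -/
def TPle : TP α → TP α → Prop := Relation.ReflTransGen (TPcov α)

/-- The minimum element `[-1̂, 0̂]` of `T(P)`. -/
def TPbot : TP α := some ⟨((⊥ : WithBot α), (⊥ : α)), WithBot.bot_lt_coe _⟩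

/-- The maximum element `1̂_{T(P)}` of `T(P)`. -/
def TPtop : TP α := none

/-- The rank function of `T(P)`: `ρ([x,y]) = ρ(y)` and `ρ(1̂_{T(P)}) = ρ(P) + 1`. -/
def TPrk (rk : α → ℕ) : TP α → ℕ
  | some p => rk p.1.2
  | none => rk (⊤ : α) + 1

theorem TPbot_ne_TPtop : TPbot α ≠ TPtop α := by exact Option.some_ne_none _

/-- The map `z : T(P) → P ∪ {2̂}` with `z([x,y]) = y` and `z(1̂_{T(P)}) = 2̂`. -/
def zmap : TP α → WithTop α
  | some p => (p.1.2 : WithTop α)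
  | none => ⊤

/-- The number of elements of the interval `[u,v]` of `P`, for `u, v ∈ P ∪ {2̂}`. -/
def intervalCard (u v : WithTop α) : ℕ :=
  Set.ncard {t : α | u ≤ (t : WithTop α) ∧ (t : WithTop α) ≤ v}

end TPoset

/-! ### The dual diamond product -/

/-- The strict order relation of the dual diamond product
`P ◇* Q = ((P ∖ {1̂}) × (Q ∖ {1̂})) ∪ {1̂}` (with `none` the new maximum), built from
the order relations `leA, ltA` and `leB, ltB` of the two factors. -/
def dsLT {A B : Type} (leA ltA : A → A → Prop) (leB ltB : B → B → Prop) :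
    Option (A × B) → Option (A × B) → Prop
  | some p, some q => (leA p.1 q.1 ∧ leB p.2 q.2) ∧ (ltA p.1 q.1 ∨ ltB p.2 q.2)
  | some _, none => True
  | none, _ => False

/-! ### EL-labelings -/

/-- The list of edge labels along a chain (given as a list of poset elements). -/
def labelsList {α Λ : Type} (lam : α → α → Λ) (l : List α) : List Λ :=
  (l.zip l.tail).map fun p => lam p.1 p.2

/-- `l` is a maximal (saturated) chain of the interval `[x,y]` with respect to the
cover relation `cov`: it runs from `x` to `y` and every step is a cover. -/
def IsMaxChainList {α : Type} (cov : α → α → Prop) (x y : α) (l : List α) : Prop :=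
  l.head? = some x ∧ l.getLast? = some y ∧ l.Chain' cov

/-- An `EL`-labeling of the poset whose cover relation is `cov`, with labels in the
linearly ordered set `(Λ, lle, llt)`: every interval has a unique rising maximal
chain, which moreover is lexicographically least among all maximal chains of the
interval. -/
def IsELLabeling (α Λ : Type) (lle llt : Λ → Λ → Prop)
    (cov : α → α → Prop) (lam : α → α → Λ) : Prop :=
  ∀ x y : α, Relation.ReflTransGen cov x y →
    ∃ l : List α, (IsMaxChainList cov x y l ∧ (labelsList lam l).Chain' lle) ∧
      (∀ l' : List α, IsMaxChainList cov x y l' →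
        (labelsList lam l').Chain' lle → l' = l) ∧
      (∀ l' : List α, IsMaxChainList cov x y l' →
        labelsList lam l = labelsList lam l' ∨
          List.Lex llt (labelsList lam l) (labelsList lam l'))

/-! ### Eulerian posets -/

/-- A graded poset is Eulerian if every nontrivial interval `[x,y]` has the
same number of elements of even rank as of odd rank. -/
def IsEulerian (α : Type) [PartialOrder α] (rk : α → ℕ) : Prop :=
  ∀ x y : α, x < y →
    Set.ncard {z : α | x ≤ z ∧ z ≤ y ∧ Even (rk z)} =
      Set.ncard {z : α | x ≤ z ∧ z ≤ y ∧ ¬ Even (rk z)}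

/-! ### The face lattice of the crosspolytope -/

/-- A face of the `n`-dimensional crosspolytope: a partial sign vector, i.e. the
pair `(S, ε)` of a subset `S ⊆ {1,…,n}` (the set of coordinates where the function
takes a value `some`) together with a sign function `ε` on `S`. -/
def CrossEl (n : ℕ) : Type := Fin n → Option Bool

/-- `(S,ε) ≤ (T,δ)` iff `S ⊆ T` and `δ` restricted to `S` is `ε`. -/
instance (n : ℕ) : PartialOrder (CrossEl n) where
  le f g := ∀ i s, f i = some s → g i = some s
  le_refl f i s h := h
  le_trans f g h fg gh i s hi := gh i s (fg i s hi)
  le_antisymm f g fg gf := by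
    funext i
    cases hf : f i with
    | some s => exact (fg i s hf).symm
    | none =>
      cases hg : g i with
      | some s => exact absurd (gf i s hg) (by simp [hf])
      | none => rfl

/-- The face lattice of the `n`-dimensional crosspolytope: all partial sign
vectors together with a new maximum element. -/
abbrev Cross (n : ℕ) : Type := WithTop (CrossEl n)

/-- The rank function of the face lattice of the crosspolytope:
`ρ(S,ε) = |S|` and the maximum has rank `n + 1`. -/
def crossRk (n : ℕ) : Cross n → ℕ
  | none => n + 1
  | some f => (Finset.univ.filter fun i : Fin n => (f i).isSome).card

/-- The minimal element (the empty face) of the crosspolytope face lattice. -/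
def crossBot (n : ℕ) : Cross n := WithTop.some (fun _ => none)

/-- The maximal element of the crosspolytope face lattice. -/
def crossTop (n : ℕ) : Cross n := ⊤

/-! ### Quasisymmetric functions -/

/-- The monomial quasisymmetric function `M_{(p₁,…,p_k)}`, as a formal power
series in the countably many commuting variables `t₁, t₂, …` (indexed by `ℕ`). -/
def MQ (R : Type) [CommRing R] (ps : List ℕ) : MvPowerSeries ℕ R :=
  fun m => if ((m.support.sort (· ≤ ·)).map fun i => m i) = ps then 1 else 0

/-- The `t`-part of a monomial in the variables `s` (index `none`) and
`t₁, t₂, …` (indices `some i`). -/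
def tpart (m : Option ℕ →₀ ℕ) : ℕ →₀ ℕ :=
  Finsupp.comapDomain some m (Option.some_injective ℕ).injOn

/-- The type B monomial quasisymmetric function `s^p · M_{(p₁,…,p_k)}`, a formal
power series in the variables `s` (index `none`) and `t₁, t₂, …` (indices `some i`). -/
def MB (R : Type) [CommRing R] (p : ℕ) (ps : List ℕ) : MvPowerSeries (Option ℕ) R :=
  fun m => if m none = p ∧
      (((tpart m).support.sort (· ≤ ·)).map fun i => tpart m i) = ps then 1 else 0

/-- The quasisymmetric function `F(P)` of the graded poset with strict order
relation `lt`, rank function `rk`, minimum `b` and maximum `t`: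
`F(P) = Σ_c M_{(ρ(x₀,x₁),…,ρ(x_{k-1},x_k))}` over all chains `c` from `b` to `t`. -/
def FQ (R : Type) [CommRing R] {α : Type} (lt : α → α → Prop) (rk : α → ℕ)
    (b t : α) : MvPowerSeries ℕ R :=
  ∑ᶠ (n : ℕ), ∑ᶠ (f : Fin (n + 1) → α)
    (_ : IsStrictChain lt f ∧ f 0 = b ∧ f (Fin.last n) = t),
    MQ R (List.ofFn fun i : Fin n => rk (f i.succ) - rk (f i.castSucc))

/-- The type B quasisymmetric function `F_B(P) = Σ_{0̂ < x ≤ 1̂} s^{ρ(x)-1}·F([x,1̂])`,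
written as a sum over all chains `0̂ < x₀ < x₁ < ⋯ < x_k = 1̂` of
`s^{ρ(x₀)-1}·M_{(ρ(x₀,x₁),…,ρ(x_{k-1},x_k))}`. -/
def FB (R : Type) [CommRing R] {α : Type} (lt : α → α → Prop) (rk : α → ℕ)
    (b t : α) : MvPowerSeries (Option ℕ) R :=
  ∑ᶠ (n : ℕ), ∑ᶠ (f : Fin (n + 1) → α)
    (_ : IsStrictChain lt f ∧ lt b (f 0) ∧ f (Fin.last n) = t),
    MB R (rk (f 0) - 1) (List.ofFn fun i : Fin n => rk (f i.succ) - rk (f i.castSucc))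

/-! ### Characters and the chain maps -/

/-- A character on `k⟨a,b⟩`: a linear functional which is multiplicative with
respect to Cartesian products of graded posets (of rank at least 1). -/
def IsCharacter (k : Type) [Field k] (G : AB k →ₗ[k] k) : Prop :=
  ∀ (α β : Type) [Fintype α] [Fintype β] [PartialOrder α] [PartialOrder β]
    [BoundedOrder α] [BoundedOrder β], ∀ (rkα : α → ℕ) (rkβ : β → ℕ),
    IsRankFun α rkα → IsRankFun β rkβ → 1 ≤ rkα ⊤ → 1 ≤ rkβ ⊤ →
    G (PsiRel k (· < ·) (fun p : α × β => rkα p.1 + rkβ p.2)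
        ((⊥ : α), (⊥ : β)) ((⊤ : α), (⊤ : β))) =
      G (PsiRel k (· < ·) rkα ⊥ ⊤) * G (PsiRel k (· < ·) rkβ ⊥ ⊤)

/-- The quasisymmetric function image `g̃F(P)` of the chain map of the second kind:
`Σ_c G(Ψ([x₀,x₁])) ⋯ G(Ψ([x_{k-1},x_k])) · M_{(ρ(x₀,x₁),…,ρ(x_{k-1},x_k))}`,
summed over all chains `c = {b = x₀ < ⋯ < x_k = t}`. -/
def gtF (k : Type) [Field k] (G : AB k →ₗ[k] k) {α : Type} (lt : α → α → Prop)
    (rk : α → ℕ) (b t : α) : MvPowerSeries ℕ k :=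
  ∑ᶠ (n : ℕ), ∑ᶠ (f : Fin (n + 1) → α)
    (_ : IsStrictChain lt f ∧ f 0 = b ∧ f (Fin.last n) = t),
    (∏ i : Fin n, G (PsiRel k lt rk (f i.castSucc) (f i.succ))) •
      MQ k (List.ofFn fun i : Fin n => rk (f i.succ) - rk (f i.castSucc))

/-- The type B quasisymmetric function image `gF_B(P) = Σ_{0̂ < x ≤ 1̂}
s^{ρ(x)-1}·g̃F([x,1̂])` of the chain map of the first kind, written as a sum over
all chains `0̂ < x₀ < ⋯ < x_k = 1̂`. -/
def gFB (k : Type) [Field k] (G : AB k →ₗ[k] k) {α : Type} (lt : α → α → Prop)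
    (rk : α → ℕ) (b t : α) : MvPowerSeries (Option ℕ) k :=
  ∑ᶠ (n : ℕ), ∑ᶠ (f : Fin (n + 1) → α)
    (_ : IsStrictChain lt f ∧ lt b (f 0) ∧ f (Fin.last n) = t),
    (∏ i : Fin n, G (PsiRel k lt rk (f i.castSucc) (f i.succ))) •
      MB k (rk (f 0) - 1) (List.ofFn fun i : Fin n => rk (f i.succ) - rk (f i.castSucc))

/-- The space of homogeneous ab-polynomials of degree `n`. -/
def ABhomog (k : Type) [Field k] (n : ℕ) : Submodule k (AB k) :=
  Submodule.span k {x : AB k | ∃ w : List Bool, w.length = n ∧ x = word k w}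

/-!
The ab-indices of the intervals of `P` satisfy `Δ Ψ([x,y]) = Σ_z Ψ([x,z]) ⊗ Ψ([z,y])`, and
`κ Ψ([x,y]) = (a-b)^{ρ(x,y)-1}`, `ν Ψ([x,y]) = (2 + #(x,y))·(a-b)^{ρ(x,y)-1}`, where `#(x,y)` is the
number of elements strictly between `x` and `y`. Hence `T(Ψ([x,2̂]))`, for the intervals of
`P ∪ {2̂}`, is determined by a recursion on `x` in which the step from `x` to `y < 2̂` has
multiplicity `2 + #(x,y)`. This multiplicity counts the elements of `T(P)` over `y` that lie above a
given element over `x`, with respect to `z : T(P) → P ∪ {2̂}`, `z([x,y]) = y`; so splitting the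
chains of `T(P)` after their first step gives the same recursion for the ab-indices of the upper
intervals of `T(P)`. Finally `Ψ(P ∪ {2̂}) = Ψ(P)·a`.
-/

section Words

variable {R : Type} [CommRing R]

theorem onBasis_word {M : Type} [AddCommMonoid M] [Module R M] (f : List Bool → M)
    (l : List Bool) : onBasis R f (word R l) = f l := by
  simp [onBasis, word]

@[elab_as_elim]
theorem word_induction {motive : AB R → Prop} (u : AB R) (zero : motive 0)
    (add : ∀ u v, motive u → motive v → motive (u + v))
    (smul : ∀ (r : R) u, motive u → motive (r • u))
    (word : ∀ l, motive (word R l)) : motive u := by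
  refine MonoidAlgebra.induction_linear u zero add fun w r => ?_
  simpa [Tcheb.word] using smul r _ (word (FreeMonoid.toList w))

variable (R) in
theorem word_nil : word R [] = 1 := by
  simp [word, MonoidAlgebra.one_def]

variable (R) in
theorem word_append (l l' : List Bool) : word R (l ++ l') = word R l * word R l' := by
  simp [word]

end Words

section Coproduct

variable {R : Type} [CommRing R]

variable (R) in
theorem Delta_word (l : List Bool) : Delta R (word R l) =
    ∑ i ∈ Finset.range l.length, word R (l.take i) ⊗ₜ[R] word R (l.drop (i + 1)) :=
  onBasis_word _ _

theorem Delta_word_append (l l' : List Bool) : Delta R (word R (l ++ l')) =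
    Delta R (word R l) * ((1 : AB R) ⊗ₜ[R] word R l') +
      (word R l ⊗ₜ[R] (1 : AB R)) * Delta R (word R l') := by
  simp only [Delta_word, List.length_append, Finset.sum_range_add, Finset.sum_mul, Finset.mul_sum,
    Algebra.TensorProduct.tmul_mul_tmul, mul_one, one_mul, ← word_append]
  refine congrArg₂ (· + ·) (Finset.sum_congr rfl fun i hi => ?_)
    (Finset.sum_congr rfl fun i _ => ?_)
  · have hi : i < l.length := Finset.mem_range.1 hi
    rw [List.take_append_of_le_length hi.le, List.drop_append_of_le_length hi]
  · rw [List.take_length_add_append, add_assoc, List.drop_length_add_append]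

theorem Delta_mul (u v : AB R) : Delta R (u * v) =
    Delta R u * ((1 : AB R) ⊗ₜ[R] v) + (u ⊗ₜ[R] (1 : AB R)) * Delta R v := by
  induction u using word_induction with
  | zero => simp
  | add u₁ u₂ h₁ h₂ => rw [add_mul, map_add, h₁, h₂, map_add, TensorProduct.add_tmul]; noncomm_ring
  | smul r u h =>
    rw [smul_mul_assoc, map_smul, h, map_smul, ← TensorProduct.smul_tmul', smul_mul_assoc,
      smul_mul_assoc, smul_add]
  | word l =>
    induction v using word_induction with
    | zero => simp
    | add v₁ v₂ h₁ h₂ =>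
      rw [mul_add, map_add, h₁, h₂, map_add, TensorProduct.tmul_add]; noncomm_ring
    | smul r v h =>
      rw [mul_smul_comm, map_smul, h, map_smul, TensorProduct.tmul_smul, mul_smul_comm,
        mul_smul_comm, smul_add]
    | word l' => rw [← word_append, Delta_word_append]

theorem Delta_one : Delta R 1 = 0 := by
  simp [← word_nil, Delta_word]

theorem Delta_letter (x : Bool) : Delta R (word R [x]) = 1 ⊗ₜ[R] 1 := by
  simp [Delta_word, word_nil]

theorem Delta_ev : Delta R (ev R) = 0 := by
  simp [ev, av, bv, Delta_letter]

theorem Delta_ev_pow (k : ℕ) : Delta R (ev R ^ k) = 0 := by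
  induction k with
  | zero => rw [pow_zero, Delta_one]
  | succ k ih => simp [pow_succ, Delta_mul, ih, Delta_ev]

end Coproduct

section Kappa

variable {R : Type} [CommRing R]

theorem kappa_word (l : List Bool) :
    kappa R (word R l) = Amap R (word R l) • ev R ^ l.length :=
  onBasis_word _ _

theorem kappa_mul (u v : AB R) : kappa R (u * v) = kappa R u * kappa R v := by
  induction u using word_induction with
  | zero => simp
  | add u₁ u₂ h₁ h₂ => simp [add_mul, h₁, h₂]
  | smul r u h => simp [h]
  | word l =>
    induction v using word_induction with
    | zero => simp
    | add v₁ v₂ h₁ h₂ => simp [mul_add, h₁, h₂]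
    | smul r v h => simp [h]
    | word l' =>
      rw [← word_append, kappa_word, kappa_word, kappa_word, word_append, map_mul,
        smul_mul_smul_comm, List.length_append, pow_add]

theorem kappa_one : kappa R 1 = 1 := by
  rw [← word_nil, kappa_word, word_nil]
  simp

theorem kappa_av : kappa R (av R) = ev R := by
  rw [av, kappa_word]
  simp [Amap, word]

theorem kappa_bv : kappa R (bv R) = 0 := by
  rw [bv, kappa_word]
  simp [Amap, word]

theorem kappa_ev : kappa R (ev R) = ev R := by
  rw [ev, map_sub, kappa_av, kappa_bv, sub_zero, ev]

theorem kappa_ev_pow (k : ℕ) : kappa R (ev R ^ k) = ev R ^ k := by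
  induction k with
  | zero => rw [pow_zero, kappa_one]
  | succ k ih => rw [pow_succ, kappa_mul, ih, kappa_ev]

end Kappa

section Recursion

variable {R : Type} [CommRing R]

/-- The linear map `u ⊗ v ↦ f(u)·m·g(v)`, through which the Sweedler sums
`Σ_u f(u₍₁₎)·m·g(u₍₂₎)` are written as `sandwich f m g (Δ u)`. -/
def sandwich (f : AB R →ₗ[R] AB R) (m : AB R) (g : AB R →ₗ[R] AB R) :
    AB R ⊗[R] AB R →ₗ[R] AB R :=
  LinearMap.mul' R (AB R) ∘ₗ TensorProduct.map (LinearMap.mulRight R m ∘ₗ f) g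

theorem sandwich_tmul (f g : AB R →ₗ[R] AB R) (m u v : AB R) :
    sandwich f m g (u ⊗ₜ[R] v) = f u * m * g v := by
  simp [sandwich]

theorem sandwich_Delta_word (f g : AB R →ₗ[R] AB R) (m : AB R) (l : List Bool) :
    sandwich f m g (Delta R (word R l)) = ∑ i ∈ Finset.range l.length,
      f (word R (l.take i)) * m * g (word R (l.drop (i + 1))) := by
  simp only [Delta_word, map_sum, sandwich_tmul]

theorem Cmap_word (l : List Bool) : Cmap R (word R l) = 2 * Amap R (word R l) +
    ∑ i ∈ Finset.range l.length, Amap R (word R (l.take i)) * Amap R (word R (l.drop (i + 1))) := by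
  simp [Cmap, Delta_word]

theorem nuMap_eq (u : AB R) :
    nuMap R u = 2 • kappa R u + sandwich (kappa R) (ev R) (kappa R) (Delta R u) := by
  induction u using word_induction with
  | zero => simp
  | add u v hu hv => simp only [map_add, hu, hv, smul_add]; abel
  | smul r u h => simp only [map_smul, h, smul_add, smul_comm r]
  | word l =>
    rw [nuMap, onBasis_word, Cmap_word, sandwich_Delta_word, kappa_word, add_smul, Finset.sum_smul,
      mul_smul, ofNat_smul_eq_nsmul]
    refine congrArg _ (Finset.sum_congr rfl fun i hi => ?_)
    have hlen : l.length = (l.take i).length + 1 + (l.drop (i + 1)).length := by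
      have := Finset.mem_range.1 hi
      simp only [List.length_take, List.length_drop]
      omega
    rw [kappa_word, kappa_word, smul_mul_assoc, smul_mul_smul_comm, ← pow_succ, ← pow_add, ← hlen]

/-- The sum of `F` over all subsets of `{0, …, n - 1}`, each listed in increasing order. -/
def sumCuts {M : Type*} [AddCommMonoid M] (n : ℕ) (F : List ℕ → M) : M :=
  ∑ S : Finset (Fin n), F ((S.sort (· ≤ ·)).map Fin.val)

theorem sumCuts_zero {M : Type*} [AddCommMonoid M] (F : List ℕ → M) : sumCuts 0 F = F [] := by
  simp [sumCuts, Finset.eq_empty_of_isEmpty]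

theorem sumCuts_succ {M : Type*} [AddCommMonoid M] (n : ℕ) (F : List ℕ → M) :
    sumCuts (n + 1) F =
      sumCuts n (fun c => F (c.map (· + 1))) + sumCuts n (fun c => F (0 :: c.map (· + 1))) := by
  classical
  have sort_map_succ (S : Finset (Fin n)) :
      (S.map (Fin.succEmb n)).sort (· ≤ ·) = (S.sort (· ≤ ·)).map Fin.succ :=
    (StrictMonoOn.map_finsetSort (Fin.succEmb n) S (Fin.strictMono_succ.strictMonoOn _)).symm
  have powerset_map_succ : (Finset.univ.map (Fin.succEmb n)).powerset =
      Finset.univ.map (Finset.mapEmbedding (Fin.succEmb n)).toEmbedding := by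
    ext S
    simp [Finset.subset_map_iff, eq_comm]
  have zero_notMem : (0 : Fin (n + 1)) ∉ Finset.univ.map (Fin.succEmb n) := by simp
  have univ_eq : (Finset.univ : Finset (Finset (Fin (n + 1)))) =
      (insert 0 (Finset.univ.map (Fin.succEmb n))).powerset := by
    rw [← Finset.powerset_univ, Fin.univ_succ, Finset.cons_eq_insert]; rfl
  rw [sumCuts, univ_eq, Finset.sum_powerset_insert zero_notMem, powerset_map_succ,
    Finset.sum_map, Finset.sum_map]
  refine congrArg₂ (· + ·) (Finset.sum_congr rfl fun S _ => ?_) (Finset.sum_congr rfl fun S _ => ?_)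
  · simp [sort_map_succ, Function.comp_def]
  · rw [Finset.sort_insert _ (by simp) (by simp)]
    simp [sort_map_succ, Function.comp_def]

theorem sumCuts_eq_add_sum {M : Type*} [AddCommMonoid M] (n : ℕ) (F : List ℕ → M) :
    sumCuts n F = F [] + ∑ i ∈ Finset.range n,
      sumCuts (n - (i + 1)) (fun c => F (i :: c.map (· + (i + 1)))) := by
  induction n generalizing F with
  | zero => simp [sumCuts_zero]
  | succ n ih =>
    rw [sumCuts_succ, ih, Finset.sum_range_succ']
    simp [Function.comp_def, add_assoc]

theorem mul_sumCuts {A : Type*} [NonUnitalNonAssocSemiring A] (m : A) (n : ℕ) (F : List ℕ → A) :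
    m * sumCuts n F = sumCuts n (fun c => m * F c) :=
  Finset.mul_sum _ _ _

theorem segments_nil (w : List Bool) : segments w [] = [w] := by
  simp [segments]

theorem segments_cons_map_add (w : List Bool) (i : ℕ) (c : List ℕ) :
    segments w (i :: c.map (· + (i + 1))) = w.take i :: segments (w.drop (i + 1)) c := by
  simp [segments, Function.comp_def]

theorem chainProd_cons_segments (s w : List Bool) (c : List ℕ) :
    chainProd R (s :: segments w c) = nuMap R (word R s) * bv R * chainProd R (segments w c) := by
  cases c <;> simp [segments, chainProd]

theorem Tmap_word (l : List Bool) :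
    Tmap R (word R l) = sumCuts l.length (fun c => chainProd R (segments l c)) :=
  onBasis_word _ _

-- Splitting off the first cut turns the sum over iterated coproducts into a recursion.
theorem Tmap_eq (u : AB R) :
    Tmap R u = kappa R u + sandwich (nuMap R) (bv R) (Tmap R) (Delta R u) := by
  induction u using word_induction with
  | zero => simp
  | add u v hu hv => simp only [map_add, hu, hv]; abel
  | smul r u h => simp only [map_smul, h, smul_add]
  | word l =>
    rw [sandwich_Delta_word, Tmap_word, sumCuts_eq_add_sum, segments_nil, chainProd]
    simp only [segments_cons_map_add, chainProd_cons_segments, Tmap_word, List.length_drop,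
      mul_sumCuts]

end Recursion

section Chains

variable {R : Type} [CommRing R] {β : Type} {lt : β → β → Prop} {rk : β → ℕ}

variable (R lt rk) in
/-- The sum of the weights of the chains from `x` to `y` with `n` steps. -/
def chainSum (n : ℕ) (x y : β) : AB R :=
  ∑ᶠ (f : Fin (n + 1) → β) (_ : IsStrictChain lt f ∧ f 0 = x ∧ f (Fin.last n) = y), chainWt R rk f

open Classical in
variable (R lt rk) in
/-- The ab-index of the rank one interval `{x < y}`, namely `(a-b)^{ρ(x,y)-1}`; it is zero unless
`x < y`. -/
def stepWt (x y : β) : AB R := if lt x y then ev R ^ (rk y - rk x - 1) else 0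

open Classical in
variable (R lt rk) in
/-- The ab-index of the interval `[x,y]`, extended by zero to the pairs with `¬ x < y`, so that sums
over intermediate elements need no side condition. -/
def intervalPsi (x y : β) : AB R := if lt x y then PsiRel R lt rk x y else 0

theorem stepWt_of_lt {x y : β} (h : lt x y) : stepWt R lt rk x y = ev R ^ (rk y - rk x - 1) :=
  if_pos h

theorem stepWt_of_not_lt {x y : β} (h : ¬ lt x y) : stepWt R lt rk x y = 0 :=
  if_neg h

theorem intervalPsi_of_lt {x y : β} (h : lt x y) :
    intervalPsi R lt rk x y = PsiRel R lt rk x y :=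
  if_pos h

theorem intervalPsi_of_not_lt {x y : β} (h : ¬ lt x y) : intervalPsi R lt rk x y = 0 :=
  if_neg h

theorem isStrictChain_cons [IsTrans β lt] {n : ℕ} {x : β} {g : Fin (n + 1) → β} :
    IsStrictChain lt (Fin.cons x g : Fin (n + 2) → β) ↔ lt x (g 0) ∧ IsStrictChain lt g :=
  liftFun_vecCons lt

theorem IsStrictChain.injective [Std.Irrefl lt] {n : ℕ} {f : Fin (n + 1) → β}
    (hf : IsStrictChain lt f) : Function.Injective f :=
  injective_of_increasing (· < ·) lt f (hf _ _)

theorem chainWt_one (f : Fin 2 → β) : chainWt R rk f = ev R ^ (rk (f 1) - rk (f 0) - 1) := by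
  simp [chainWt]

theorem chainWt_cons {n : ℕ} (x : β) (g : Fin (n + 2) → β) :
    chainWt R rk (Fin.cons x g : Fin (n + 3) → β) =
      ev R ^ (rk (g 0) - rk x - 1) * bv R * chainWt R rk g := by
  rw [chainWt, chainWt, List.ofFn_succ, List.ofFn_succ (f := fun i : Fin (n + 1) => _)]
  simp [List.intersperse, mul_assoc, show (Fin.cons x g : Fin (n + 3) → β) 2 = g 1 from rfl]

theorem chainSum_zero {x y : β} (h : x ≠ y) : chainSum R lt rk 0 x y = 0 :=
  finsum_eq_zero_of_forall_eq_zero fun _ =>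
    @finsum_of_isEmpty _ _ _ ⟨fun ⟨_, hx, hy⟩ => h (hx.symm.trans hy)⟩ _

theorem chainSum_succ_of_not_lt {n : ℕ} {x y : β} (h : ¬ lt x y) :
    chainSum R lt rk (n + 1) x y = 0 :=
  finsum_eq_zero_of_forall_eq_zero fun _ =>
    @finsum_of_isEmpty _ _ _ ⟨fun ⟨hf, hx, hy⟩ => h (hx ▸ hy ▸ hf 0 _ Fin.last_pos)⟩ _

open Classical in
theorem chainSum_eq_sum [Fintype β] (n : ℕ) (x y : β) :
    chainSum R lt rk n x y = ∑ f : Fin (n + 1) → β,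
      if IsStrictChain lt f ∧ f 0 = x ∧ f (Fin.last n) = y then chainWt R rk f else 0 := by
  rw [chainSum, finsum_eq_sum_of_fintype]
  simp only [finsum_eq_if]

open Classical in
theorem chainSum_succ_eq_sum [Fintype β] [IsTrans β lt] (n : ℕ) (x y : β) :
    chainSum R lt rk (n + 1) x y = ∑ g : Fin (n + 1) → β,
      if lt x (g 0) ∧ IsStrictChain lt g ∧ g (Fin.last n) = y then
        chainWt R rk (Fin.cons x g : Fin (n + 2) → β) else 0 := by
  rw [chainSum_eq_sum, ← (Fin.consEquiv fun _ => β).sum_comp, Fintype.sum_prod_type,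
    Fintype.sum_eq_single x]
  · simp [Fin.consEquiv, isStrictChain_cons, ← Fin.succ_last, and_assoc]
  · intro z hz
    simp [Fin.consEquiv, hz]

theorem chainSum_one [Finite β] [IsTrans β lt] (x y : β) :
    chainSum R lt rk 1 x y = stepWt R lt rk x y := by
  classical
  cases nonempty_fintype β
  rw [chainSum_succ_eq_sum, ← (Equiv.funUnique (Fin 1) β).symm.sum_comp,
    Fintype.sum_eq_single y]
  · simp [IsStrictChain, chainWt_one, stepWt]
  · intro z hz
    simp [hz]

theorem chainSum_add_two [Fintype β] [IsTrans β lt] (n : ℕ) (x y : β) :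
    chainSum R lt rk (n + 2) x y =
      ∑ z, stepWt R lt rk x z * bv R * chainSum R lt rk (n + 1) z y := by
  classical
  simp only [chainSum_eq_sum (n + 1), Finset.mul_sum]
  rw [chainSum_succ_eq_sum, Finset.sum_comm]
  refine Finset.sum_congr rfl fun g _ => ?_
  rw [Fintype.sum_eq_single (g 0) fun z hz => by simp [hz.symm], chainWt_cons]
  by_cases h : lt x (g 0) <;> simp [stepWt, h]

theorem chainSum_eq_zero_of_card_le [Fintype β] [Std.Irrefl lt] {n : ℕ}
    (hn : Fintype.card β ≤ n) (x y : β) : chainSum R lt rk n x y = 0 := by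
  classical
  rw [chainSum_eq_sum]
  refine Finset.sum_eq_zero fun f _ => if_neg fun hf => ?_
  have := Fintype.card_le_of_injective f hf.1.injective
  simp only [Fintype.card_fin] at this
  omega

theorem PsiRel_eq_sum_range [Fintype β] [Std.Irrefl lt] {n : ℕ}
    (hn : Fintype.card β ≤ n) (x y : β) :
    PsiRel R lt rk x y = ∑ k ∈ Finset.range n, chainSum R lt rk k x y := by
  refine finsum_eq_sum_of_support_subset _ fun k hk => ?_
  contrapose! hk
  rw [Finset.coe_range, Set.mem_Iio, not_lt] at hk
  exact Function.notMem_support.2 (chainSum_eq_zero_of_card_le (hn.trans hk) x y)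

theorem intervalPsi_eq_sum_range [Fintype β] [Std.Irrefl lt] {n : ℕ}
    (hn : Fintype.card β ≤ n) (x y : β) :
    intervalPsi R lt rk x y = ∑ k ∈ Finset.range n, chainSum R lt rk (k + 1) x y := by
  by_cases h : lt x y
  · rw [intervalPsi_of_lt h, PsiRel_eq_sum_range (Nat.le_succ_of_le hn), Finset.sum_range_succ',
      chainSum_zero (ne_of_irrefl h), add_zero]
  · simp only [intervalPsi_of_not_lt h, chainSum_succ_of_not_lt h, Finset.sum_const_zero]

-- Split each chain after its first step.
theorem intervalPsi_eq [Fintype β] [IsStrictOrder β lt] (x y : β) : intervalPsi R lt rk x y =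
    stepWt R lt rk x y + ∑ z, stepWt R lt rk x z * bv R * intervalPsi R lt rk z y := by
  rw [intervalPsi_eq_sum_range (Nat.le_succ _), Finset.sum_range_succ', chainSum_one, add_comm]
  simp only [intervalPsi_eq_sum_range le_rfl, chainSum_add_two, Finset.mul_sum]
  rw [Finset.sum_comm]

end Chains

section Intervals

variable {R : Type} [CommRing R] {β : Type} {lt : β → β → Prop} {rk : β → ℕ}

theorem Delta_stepWt (x y : β) : Delta R (stepWt R lt rk x y) = 0 := by
  rw [stepWt]
  split_ifs
  · exact Delta_ev_pow _
  · exact map_zero _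

theorem kappa_stepWt (x y : β) : kappa R (stepWt R lt rk x y) = stepWt R lt rk x y := by
  rw [stepWt]
  split_ifs
  · exact kappa_ev_pow _
  · exact map_zero _

theorem Delta_stepWt_mul_bv_mul (x y : β) (u : AB R) :
    Delta R (stepWt R lt rk x y * bv R * u) = stepWt R lt rk x y ⊗ₜ[R] u +
      ((stepWt R lt rk x y * bv R) ⊗ₜ[R] (1 : AB R)) * Delta R u := by
  simp [Delta_mul, Delta_stepWt, bv, Delta_letter]

theorem stepWt_mul_ev_mul_stepWt [IsTrans β lt] (hrk : ∀ ⦃x y⦄, lt x y → rk x < rk y) {x y z : β}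
    (hxz : lt x z) (hzy : lt z y) :
    stepWt R lt rk x z * ev R * stepWt R lt rk z y = stepWt R lt rk x y := by
  have := hrk hxz
  have := hrk hzy
  rw [stepWt_of_lt hxz, stepWt_of_lt hzy, stepWt_of_lt (_root_.trans hxz hzy), ← pow_succ,
    ← pow_add]
  congr 1
  omega

variable [IsStrictOrder β lt]

theorem Delta_intervalPsi [Fintype β] (x y : β) : Delta R (intervalPsi R lt rk x y) =
    ∑ z, intervalPsi R lt rk x z ⊗ₜ[R] intervalPsi R lt rk z y := by
  induction x using (Finite.wellFounded_of_trans_of_irrefl (Function.swap lt)).induction with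
  | _ x ih =>
  have Delta_summand (z : β) :
      Delta R (stepWt R lt rk x z * bv R * intervalPsi R lt rk z y) =
        stepWt R lt rk x z ⊗ₜ[R] intervalPsi R lt rk z y +
          ∑ w, (stepWt R lt rk x z * bv R * intervalPsi R lt rk z w) ⊗ₜ[R]
            intervalPsi R lt rk w y := by
    by_cases h : lt x z
    · simp only [Delta_stepWt_mul_bv_mul, ih z h, Finset.mul_sum,
        Algebra.TensorProduct.tmul_mul_tmul, one_mul]
    · simp [stepWt_of_not_lt h]
  calc Delta R (intervalPsi R lt rk x y)
      = ∑ z, stepWt R lt rk x z ⊗ₜ[R] intervalPsi R lt rk z y +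
          ∑ w, (∑ z, stepWt R lt rk x z * bv R * intervalPsi R lt rk z w) ⊗ₜ[R]
            intervalPsi R lt rk w y := by
        rw [intervalPsi_eq, map_add, Delta_stepWt, zero_add, map_sum]
        simp only [Delta_summand, Finset.sum_add_distrib, TensorProduct.sum_tmul]
        rw [Finset.sum_comm (s := Finset.univ (α := β))]
    _ = ∑ z, intervalPsi R lt rk x z ⊗ₜ[R] intervalPsi R lt rk z y := by
        simp only [← Finset.sum_add_distrib, ← TensorProduct.add_tmul, ← intervalPsi_eq]

theorem kappa_intervalPsi [Finite β] (x y : β) :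
    kappa R (intervalPsi R lt rk x y) = stepWt R lt rk x y := by
  cases nonempty_fintype β
  simp [intervalPsi_eq x y, kappa_mul, kappa_bv, kappa_stepWt]

theorem Tmap_intervalPsi [Fintype β] (x y : β) : Tmap R (intervalPsi R lt rk x y) =
    stepWt R lt rk x y + ∑ z, nuMap R (intervalPsi R lt rk x z) * bv R *
      Tmap R (intervalPsi R lt rk z y) := by
  simp only [Tmap_eq (intervalPsi R lt rk x y), kappa_intervalPsi, Delta_intervalPsi, map_sum,
    sandwich_tmul]

theorem nuMap_intervalPsi [Finite β] (hrk : ∀ ⦃x y⦄, lt x y → rk x < rk y) (x y : β) :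
    nuMap R (intervalPsi R lt rk x y) =
      (2 + {z | lt x z ∧ lt z y}.ncard) • stepWt R lt rk x y := by
  classical
  cases nonempty_fintype β
  have sandwich_summand (z : β) :
      stepWt R lt rk x z * ev R * stepWt R lt rk z y =
        if lt x z ∧ lt z y then stepWt R lt rk x y else 0 := by
    split_ifs with h
    · exact stepWt_mul_ev_mul_stepWt hrk h.1 h.2
    · rcases not_and_or.1 h with h | h <;> simp [stepWt_of_not_lt h]
  simp only [nuMap_eq, Delta_intervalPsi, map_sum, sandwich_tmul, kappa_intervalPsi,
    sandwich_summand, ← Finset.sum_filter, Finset.sum_const, add_smul, Set.ncard_eq_toFinset_card',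
    Set.toFinset_ofPred]

end Intervals

section Fibers

variable {R : Type} [CommRing R] {β γ : Type} {ltβ : β → β → Prop} {lt : γ → γ → Prop}
  {rk : γ → ℕ} {z : β → γ}

theorem stepWt_comp (lt_of_lt : ∀ ⦃p q⦄, ltβ p q → lt (z p) (z q)) {p q : β} (h : ltβ p q) :
    stepWt R ltβ (rk ∘ z) p q = stepWt R lt rk (z p) (z q) := by
  rw [stepWt_of_lt h, stepWt_of_lt (lt_of_lt h)]
  rfl

theorem sum_stepWt_mul_comp [Fintype β] [Fintype γ]
    (lt_of_lt : ∀ ⦃p q⦄, ltβ p q → lt (z p) (z q)) (p : β) (F : γ → AB R) :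
    ∑ q, stepWt R ltβ (rk ∘ z) p q * F (z q) =
      ∑ y, {q | ltβ p q ∧ z q = y}.ncard • (stepWt R lt rk (z p) y * F y) := by
  classical
  rw [← Finset.sum_fiberwise Finset.univ z]
  refine Fintype.sum_congr _ _ fun y => ?_
  have summand (q : β) (hq : z q = y) : stepWt R ltβ (rk ∘ z) p q * F (z q) =
      if ltβ p q then stepWt R lt rk (z p) y * F y else 0 := by
    split_ifs with h
    · rw [stepWt_comp lt_of_lt h, hq]
    · rw [stepWt_of_not_lt h, zero_mul]
  rw [Finset.sum_congr rfl fun q hq => summand q (Finset.mem_filter.1 hq).2, ← Finset.sum_filter,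
    Finset.filter_filter, Finset.sum_const, Set.ncard_eq_toFinset_card', Set.toFinset_ofPred]
  simp only [and_comm]

theorem intervalPsi_comp [Finite β] [Finite γ] [IsStrictOrder β ltβ] [IsStrictOrder γ lt]
    (hrk : ∀ ⦃x y⦄, lt x y → rk x < rk y) {t : β}
    (lt_of_lt : ∀ ⦃p q⦄, ltβ p q → lt (z p) (z q)) (lt_top : ∀ ⦃p⦄, lt (z p) (z t) → ltβ p t)
    (ncard_fiber : ∀ ⦃p y⦄, lt (z p) y → lt y (z t) →
      {q | ltβ p q ∧ z q = y}.ncard = 2 + {w | lt (z p) w ∧ lt w y}.ncard) (p : β) :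
    intervalPsi R ltβ (rk ∘ z) p t = Tmap R (intervalPsi R lt rk (z p) (z t)) := by
  cases nonempty_fintype β
  cases nonempty_fintype γ
  induction p using (Finite.wellFounded_of_trans_of_irrefl (Function.swap ltβ)).induction with
  | _ p ih =>
  by_cases hp : lt (z p) (z t)
  swap
  · rw [intervalPsi_of_not_lt (mt (@lt_of_lt p t) hp), intervalPsi_of_not_lt hp, map_zero]
  have ih_summand (q : β) :
      stepWt R ltβ (rk ∘ z) p q * bv R * intervalPsi R ltβ (rk ∘ z) q t =
        stepWt R ltβ (rk ∘ z) p q * (bv R * Tmap R (intervalPsi R lt rk (z q) (z t))) := by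
    by_cases h : ltβ p q
    · rw [ih q h, mul_assoc]
    · simp [stepWt_of_not_lt h]
  have fiber_summand (y : γ) :
      {q | ltβ p q ∧ z q = y}.ncard •
          (stepWt R lt rk (z p) y * (bv R * Tmap R (intervalPsi R lt rk y (z t)))) =
        nuMap R (intervalPsi R lt rk (z p) y) * bv R * Tmap R (intervalPsi R lt rk y (z t)) := by
    rw [nuMap_intervalPsi hrk, smul_mul_assoc, smul_mul_assoc, mul_assoc]
    by_cases hy : lt (z p) y
    · by_cases hyt : lt y (z t)
      · rw [ncard_fiber hy hyt]
      · simp [intervalPsi_of_not_lt hyt]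
    · simp [stepWt_of_not_lt hy]
  rw [intervalPsi_eq, Tmap_intervalPsi, stepWt_comp lt_of_lt (lt_top hp)]
  simp only [ih_summand, ← fiber_summand]
  rw [sum_stepWt_mul_comp lt_of_lt p fun y => bv R * Tmap R (intervalPsi R lt rk y (z t))]

end Fibers

section WithTop

variable {R : Type} [CommRing R] {α : Type} [PartialOrder α] [OrderTop α] {rk : α → ℕ}

/-- The rank function of `P ∪ {2̂}`, encoded as `WithTop α`, where `ρ(2̂) = ρ(P) + 1`. -/
def withTopRk (rk : α → ℕ) : WithTop α → ℕ := WithTop.recTopCoe (rk ⊤ + 1) rk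

theorem withTopRk_coe (x : α) : withTopRk rk x = rk x := rfl

theorem withTopRk_top : withTopRk rk ⊤ = rk ⊤ + 1 := rfl

theorem withTopRk_strictMono (hrk : StrictMono rk) : StrictMono (withTopRk rk) :=
  WithTop.strictMono_iff.2 ⟨hrk, fun _ => Nat.lt_succ_of_le (hrk.monotone le_top)⟩

theorem stepWt_coe_coe (x y : α) :
    stepWt R (· < ·) (withTopRk rk) (x : WithTop α) y = stepWt R (· < ·) rk x y := by
  by_cases h : x < y
  · rw [stepWt_of_lt h, stepWt_of_lt (WithTop.coe_lt_coe.2 h), withTopRk_coe, withTopRk_coe]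
  · rw [stepWt_of_not_lt h, stepWt_of_not_lt (mt WithTop.coe_lt_coe.1 h)]

theorem stepWt_coe_top [DecidableEq α] (hrk : StrictMono rk) (x : α) :
    stepWt R (· < ·) (withTopRk rk) (x : WithTop α) ⊤ =
      (if x = ⊤ then 1 else 0) + stepWt R (· < ·) rk x ⊤ * ev R := by
  rw [stepWt_of_lt (WithTop.coe_lt_top x), withTopRk_top, withTopRk_coe]
  split_ifs with hx
  · simp [hx, stepWt]
  · have hx := lt_top_iff_ne_top.2 hx
    have := hrk hx
    rw [stepWt_of_lt hx, zero_add, ← pow_succ]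
    congr 1
    omega

-- Adjoining `2̂` multiplies the ab-index by `a`, since `a = (a - b) + b`: the last element of a
-- chain below `2̂` is either smaller than `1̂` or equal to it.
theorem intervalPsi_coe_top [Finite α] [DecidableEq α] (hrk : StrictMono rk) (x : α) :
    intervalPsi R (· < ·) (withTopRk rk) (x : WithTop α) ⊤ =
      (if x = ⊤ then 1 else 0) + intervalPsi R (· < ·) rk x ⊤ * av R := by
  cases nonempty_fintype α
  induction x using WellFoundedGT.induction with
  | _ x ih =>
  have ih_summand (z : α) :
      stepWt R (· < ·) rk x z * bv R * intervalPsi R (· < ·) (withTopRk rk) (z : WithTop α) ⊤ =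
        stepWt R (· < ·) rk x z * bv R *
          ((if z = ⊤ then 1 else 0) + intervalPsi R (· < ·) rk z ⊤ * av R) := by
    by_cases h : x < z
    · rw [ih z h]
    · simp [stepWt_of_not_lt h]
  have sum_withTop (F : WithTop α → AB R) : ∑ z, F z = F ⊤ + ∑ z : α, F z := Fintype.sum_option F
  rw [intervalPsi_eq, stepWt_coe_top hrk, sum_withTop, intervalPsi_of_not_lt (lt_irrefl ⊤)]
  simp only [stepWt_coe_coe, ih_summand, mul_add, mul_ite, mul_one, mul_zero,
    Finset.sum_add_distrib, Finset.sum_ite_eq', Finset.mem_univ, if_true, ← mul_assoc,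
    ← Finset.sum_mul]
  rw [intervalPsi_eq x ⊤, ev]
  noncomm_ring

end WithTop

section TchebyshevOrder

variable {α : Type} [PartialOrder α] [BoundedOrder α]

instance : IsTrans (TP α) (TPlt α) :=
  inferInstanceAs (IsTrans _ (Relation.TransGen _))

instance [Finite α] : Finite (TP α) :=
  inferInstanceAs (Finite (Option {p : WithBot α × α // p.1 < (p.2 : WithBot α)}))

theorem TPrk_eq_withTopRk_comp_zmap (rk : α → ℕ) : TPrk α rk = withTopRk rk ∘ zmap α := by
  funext p
  cases p <;> rfl

theorem zmap_lt_zmap_of_TPcov {p q : TP α} (h : TPcov α p q) : zmap α p < zmap α q := by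
  cases h with
  | up _ _ hc => exact WithTop.coe_lt_coe.2 hc.lt
  | same _ _ hc => exact WithTop.coe_lt_coe.2 hc.lt
  | top => exact WithTop.coe_lt_top _

theorem zmap_lt_zmap {p q : TP α} (h : TPlt α p q) : zmap α p < zmap α q := by
  simpa [Relation.transGen_eq_self] using
    h.lift (p := (· < ·)) (zmap α) fun _ _ => zmap_lt_zmap_of_TPcov

instance : IsStrictOrder (TP α) (TPlt α) where
  irrefl _ h := (zmap_lt_zmap h).false

theorem left_eq_or_le_left_of_TPlt {p q : TPel α} (h : TPlt α (some p) (some q)) :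
    p.1.1 = q.1.1 ∨ (p.1.2 : WithBot α) ≤ q.1.1 := by
  generalize hq : (some q : TP α) = r at h
  induction h generalizing q with
  | single hc =>
    subst hq
    cases hc with
    | up => exact Or.inr le_rfl
    | same => exact Or.inl rfl
  | @tail m _ hpm hc ih =>
    subst hq
    cases hc with
    | up => exact Or.inr (WithBot.coe_le_coe.2 (WithTop.coe_lt_coe.1 (zmap_lt_zmap hpm)).le)
    | @same x y _ hxy => simpa using ih (q := ⟨(x, y), hxy⟩) rfl

variable [Finite α]

theorem TPle_of_right_le {w : WithBot α} {x y : α} (hx : w < (x : WithBot α))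
    (hy : w < (y : WithBot α)) (h : x ≤ y) : TPle α (some ⟨(w, x), hx⟩) (some ⟨(w, y), hy⟩) := by
  classical
  cases nonempty_fintype α
  let _ : LocallyFiniteOrder α := Fintype.toLocallyFiniteOrder
  have hxy := le_iff_reflTransGen_covBy.1 h
  clear h
  induction hxy with
  | refl => exact .refl
  | @tail b c hxb hbc ih =>
    have hb := hx.trans_le (WithBot.coe_le_coe.2 (le_iff_reflTransGen_covBy.2 hxb))
    exact (ih hb).tail (.same hb hy hbc)

theorem TPlt_TPtop_of_zmap_lt_top {p : TP α} (h : zmap α p < ⊤) : TPlt α p (TPtop α) := by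
  cases p with
  | none => exact absurd h (lt_irrefl ⊤)
  | some p =>
    have htop : p.1.1 < ((⊤ : α) : WithBot α) := p.2.trans_le (WithBot.coe_le_coe.2 le_top)
    exact .tail' (TPle_of_right_le p.2 htop le_top) (.top htop)

theorem TPlt_of_right_lt {w : WithBot α} {x y : α} (hx : w < (x : WithBot α))
    (hy : w < (y : WithBot α)) (h : x < y) : TPlt α (some ⟨(w, x), hx⟩) (some ⟨(w, y), hy⟩) := by
  refine (Relation.reflTransGen_iff_eq_or_transGen.1 (TPle_of_right_le hx hy h.le)).resolve_left ?_
  intro heq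
  have : zmap α (some ⟨(w, y), hy⟩) = zmap α (some ⟨(w, x), hx⟩) := congrArg (zmap α) heq
  exact h.ne' (WithTop.coe_injective this)

theorem TPlt_of_right_le_left {w : WithBot α} {x y y' : α} (hx : w < (x : WithBot α))
    (h : x ≤ y) (hy : (y : WithBot α) < (y' : WithBot α)) :
    TPlt α (some ⟨(w, x), hx⟩) (some ⟨(y, y'), hy⟩) := by
  obtain ⟨c, hyc, hcy'⟩ := exists_covBy_le_of_lt (WithBot.coe_lt_coe.1 hy)
  have hwy := hx.trans_le (WithBot.coe_le_coe.2 h)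
  have hyc' := WithBot.coe_lt_coe.2 hyc.lt
  exact (Relation.TransGen.tail' (TPle_of_right_le hx hwy h) (.up hwy hyc' hyc)).trans_left
    (TPle_of_right_le hyc' hy hcy')

theorem TPlt_some_iff {p q : TPel α} : TPlt α (some p) (some q) ↔
    p.1.2 < q.1.2 ∧ (p.1.1 = q.1.1 ∨ (p.1.2 : WithBot α) ≤ q.1.1) := by
  refine ⟨fun h => ⟨WithTop.coe_lt_coe.1 (zmap_lt_zmap h), left_eq_or_le_left_of_TPlt h⟩, ?_⟩
  obtain ⟨⟨w, x⟩, hx⟩ := p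
  obtain ⟨⟨w', x'⟩, hx'⟩ := q
  rintro ⟨hlt, rfl | hle⟩
  · exact TPlt_of_right_lt hx hx' hlt
  · lift w' to α using ne_bot_of_le_ne_bot WithBot.coe_ne_bot hle
    exact TPlt_of_right_le_left hx (WithBot.coe_le_coe.1 hle) hx'

end TchebyshevOrder

section TchebyshevFibers

theorem ncard_Ico_eq_ncard_Ioo_add_one {α : Type*} [PartialOrder α] [Finite α] {x y : α}
    (h : x < y) : (Set.Ico x y).ncard = (Set.Ioo x y).ncard + 1 := by
  rw [← Set.Ioo_insert_left h, Set.ncard_insert_of_notMem Set.left_notMem_Ioo]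

variable {α : Type} [PartialOrder α] [BoundedOrder α] [Finite α]

-- The elements of `T(P)` above `[w,x]` that `z` sends to `y` are the `[v,y]` with `v = w` or
-- `x ≤ v < y`.
theorem ncard_TPlt_zmap_eq (p : TPel α) {y : α} (h : p.1.2 < y) :
    {q : TP α | TPlt α (some p) q ∧ zmap α q = y}.ncard = 2 + (Set.Ioo p.1.2 y).ncard := by
  obtain ⟨⟨w, x⟩, hx⟩ := p
  dsimp only at h ⊢
  have w_notMem : w ∉ WithBot.some '' Set.Ico x y := by
    rintro ⟨v, hv, rfl⟩
    exact hv.1.not_gt (WithBot.coe_lt_coe.1 hx)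
  have mem_left_lt {v : WithBot α} (hv : v ∈ insert w (WithBot.some '' Set.Ico x y)) : v < y := by
    obtain rfl | ⟨v, hv, rfl⟩ := hv
    · exact hx.trans (WithBot.coe_lt_coe.2 h)
    · exact WithBot.coe_lt_coe.2 hv.2
  calc {q : TP α | TPlt α (some ⟨(w, x), hx⟩) q ∧ zmap α q = y}.ncard
      = (insert w (WithBot.some '' Set.Ico x y)).ncard := by
        symm
        refine Set.ncard_congr (fun v hv => some ⟨(v, y), mem_left_lt hv⟩) ?_ ?_ ?_
        · intro v hv
          refine ⟨TPlt_some_iff.2 ⟨h, ?_⟩, rfl⟩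
          obtain rfl | ⟨v, hv, rfl⟩ := hv
          · exact .inl rfl
          · exact .inr (WithBot.coe_le_coe.2 hv.1)
        · intro v v' _ _ hvv'
          exact congrArg (fun p : TPel α => p.1.1) (Option.some_injective _ hvv')
        · rintro (_ | ⟨⟨v, y'⟩, hv⟩) ⟨hlt, hy⟩
          · exact absurd hy WithTop.top_ne_coe
          obtain rfl : y' = y := WithTop.coe_injective hy
          refine ⟨v, ?_, rfl⟩
          obtain rfl | hle := (TPlt_some_iff.1 hlt).2
          · exact Set.mem_insert _ _
          · lift v to α using ne_bot_of_le_ne_bot WithBot.coe_ne_bot hle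
            exact .inr ⟨v, ⟨WithBot.coe_le_coe.1 hle, WithBot.coe_lt_coe.1 hv⟩, rfl⟩
    _ = 2 + (Set.Ioo x y).ncard := by
        rw [Set.ncard_insert_of_notMem w_notMem,
          Set.ncard_image_of_injective _ WithBot.coe_injective, ncard_Ico_eq_ncard_Ioo_add_one h]
        omega

theorem ncard_fiber_zmap {p : TP α} {y : WithTop α} (h : zmap α p < y) (hy : y < ⊤) :
    {q : TP α | TPlt α p q ∧ zmap α q = y}.ncard = 2 + (Set.Ioo (zmap α p) y).ncard := by
  lift y to α using hy.ne
  cases p with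
  | none => exact absurd h not_top_lt
  | some p =>
    rw [ncard_TPlt_zmap_eq p (WithTop.coe_lt_coe.1 h), ← Set.ncard_image_of_injective _
      WithTop.coe_injective, WithTop.image_coe_Ioo]
    rfl

end TchebyshevFibers

section Main

variable {α : Type} [PartialOrder α] {rk : α → ℕ}

theorem IsRankFun.strictMono [Finite α] [OrderBot α] (hrk : IsRankFun α rk) : StrictMono rk := by
  classical
  cases nonempty_fintype α
  let _ : LocallyFiniteOrder α := Fintype.toLocallyFiniteOrder
  refine (strictMono_iff_forall_covBy rk).2 fun x y hxy => ?_
  rw [hrk.2 x y hxy]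
  exact Nat.lt_succ_self _

theorem IsRankFun.nontrivial [BoundedOrder α] (hrk : IsRankFun α rk) (h1 : 1 ≤ rk ⊤) :
    Nontrivial α :=
  ⟨⊥, ⊤, fun h => by rw [← h, hrk.1] at h1; omega⟩

theorem intervalPsi_TPlt_TPtop [Finite α] [BoundedOrder α] (R : Type) [CommRing R]
    (hrk : StrictMono rk) (p : TP α) :
    intervalPsi R (TPlt α) (TPrk α rk) p (TPtop α) =
      Tmap R (intervalPsi R (· < ·) (withTopRk rk) (zmap α p) ⊤) := by
  rw [TPrk_eq_withTopRk_comp_zmap]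
  exact intervalPsi_comp (z := zmap α) (t := TPtop α) (withTopRk_strictMono hrk)
    (fun _ _ => zmap_lt_zmap) (fun _ => TPlt_TPtop_of_zmap_lt_top) (fun _ _ => ncard_fiber_zmap) p

theorem abindex_tchebyshev_transform_general (R : Type) [CommRing R] (α : Type) [Finite α]
    [PartialOrder α] [BoundedOrder α] [Nontrivial α] (rk : α → ℕ) (hrk : StrictMono rk) :
    PsiRel R (TPlt α) (TPrk α rk) (TPbot α) (TPtop α) =
      Tmap R (PsiRel R (· < ·) rk (⊥ : α) (⊤ : α) * av R) := by
  classical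
  have zmap_TPbot : zmap α (TPbot α) = (⊥ : α) := rfl
  have TPbot_lt_TPtop : TPlt α (TPbot α) (TPtop α) :=
    TPlt_TPtop_of_zmap_lt_top (WithTop.coe_lt_top _)
  calc PsiRel R (TPlt α) (TPrk α rk) (TPbot α) (TPtop α)
      = Tmap R (intervalPsi R (· < ·) (withTopRk rk) ((⊥ : α) : WithTop α) ⊤) := by
        rw [← intervalPsi_of_lt TPbot_lt_TPtop, intervalPsi_TPlt_TPtop R hrk, zmap_TPbot]
    _ = Tmap R (PsiRel R (· < ·) rk ⊥ ⊤ * av R) := by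
        rw [intervalPsi_coe_top hrk, if_neg bot_ne_top, zero_add, intervalPsi_of_lt bot_lt_top]

end Main

theorem abindex_tchebyshev_transform
    (α : Type) [Fintype α] [PartialOrder α] [BoundedOrder α]
    (rk : α → ℕ) (hrk : IsRankFun α rk) (h1 : 1 ≤ rk (⊤ : α)) :
    PsiRel ℤ (TPlt α) (TPrk α rk) (TPbot α) (TPtop α) =
      Tmap ℤ (PsiRel ℤ (· < ·) rk (⊥ : α) (⊤ : α) * av ℤ) :=
  have := hrk.nontrivial h1
  abindex_tchebyshev_transform_general ℤ α rk hrk.strictMono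

end Tcheb
end
end

section
/- For every n ≥ 1, the ab-index of the Tchebyshev transform of the Boolean algebra B_n equals the ab-index of the face lattice of the n-dimensional crosspolytope: Ψ(T(B_n)) = Ψ(C_n). -/
open scoped TensorProduct

noncomputable section

namespace Tcheb

/-! Project the chains of `T(P)` to `P ∪ {2̂}` by `[x, y] ↦ y`, and the chains of the crosspolytope
to `B_n ∪ {2̂}` by `(S, ε) ↦ S`.  Weights depend only on the projected chain.  In both posets, the
elements over `w` that lie above a given element over `y` are counted by `|[y, w]|`: in `T(P)` they
are `[x, w]` and the `[x', w]` with `y ≤ x' < w`, and in the crosspolytope they are the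
`2^|w ∖ y|` ways of extending a sign function from `y` to `w`.  Hence a chain downstairs has the
same number of lifts in both posets. -/

section ChainLifts

variable {α : Type} {β : Type*} {lt : α → α → Prop} {z : α → β} {b : α} {n : ℕ}

theorem isStrictChain_iff_forall_succ [IsTrans α lt] {f : Fin (n + 1) → α} :
    IsStrictChain lt f ↔ ∀ i : Fin n, lt (f i.castSucc) (f i.succ) :=
  Fin.liftFun_iff_succ lt

theorem isStrictChain_snoc [IsTrans α lt] {f : Fin (n + 1) → α} {v : α} :
    IsStrictChain lt (Fin.snoc f v : Fin (n + 2) → α) ↔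
      IsStrictChain lt f ∧ lt (f (Fin.last n)) v := by
  simp only [isStrictChain_iff_forall_succ, Fin.forall_fin_succ', Fin.snoc_castSucc,
    Fin.succ_castSucc, Fin.succ_last, Fin.snoc_last]

variable (lt z b) in
/-- The lifts through `z : α → β` of a sequence `g` in `β` to an `lt`-chain in `α` that
starts at `b`. -/
def chainLifts (g : Fin (n + 1) → β) : Set (Fin (n + 1) → α) :=
  {f | IsStrictChain lt f ∧ f 0 = b ∧ z ∘ f = g}

theorem snoc_mem_chainLifts_snoc [IsTrans α lt] {f : Fin (n + 1) → α} {v : α}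
    {g : Fin (n + 1) → β} {w : β} :
    (Fin.snoc f v : Fin (n + 2) → α) ∈ chainLifts lt z b (Fin.snoc g w : Fin (n + 2) → β) ↔
      f ∈ chainLifts lt z b g ∧ lt (f (Fin.last n)) v ∧ z v = w := by
  simp only [chainLifts, Set.mem_ofPred_eq, isStrictChain_snoc, Fin.snoc_apply_zero, Fin.comp_snoc,
    Fin.snoc_inj]
  tauto

theorem chainLifts_zero (g : Fin 1 → β) (hg : g 0 = z b) :
    chainLifts lt z b g = {fun _ => b} := by
  refine Set.eq_singleton_iff_unique_mem.2 ⟨⟨?_, rfl, ?_⟩, fun f hf => ?_⟩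
  · exact fun i j hij => absurd (Subsingleton.elim (α := Fin 1) i j) hij.ne
  · exact funext fun i => Subsingleton.elim (α := Fin 1) 0 i ▸ hg.symm
  · exact funext fun i => Subsingleton.elim (α := Fin 1) 0 i ▸ hf.2.1

variable (lt z b) in
/-- Splitting a lift of `g₀, …, gₙ, w` into a lift of `g₀, …, gₙ` and its last element. -/
def chainLiftsSnocEquiv [IsTrans α lt] (g : Fin (n + 1) → β) (w : β) :
    chainLifts lt z b (Fin.snoc g w : Fin (n + 2) → β) ≃
      Σ f : chainLifts lt z b g, {v | lt (f.1 (Fin.last n)) v ∧ z v = w} where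
  toFun f :=
    have hf := snoc_mem_chainLifts_snoc.1 ((Fin.snoc_init_self f.1).symm ▸ f.2)
    ⟨⟨Fin.init f.1, hf.1⟩, ⟨f.1 (Fin.last _), hf.2⟩⟩
  invFun p := ⟨Fin.snoc p.1.1 p.2.1, snoc_mem_chainLifts_snoc.2 ⟨p.1.2, p.2.2⟩⟩
  left_inv f := Subtype.ext (Fin.snoc_init_self f.1)
  right_inv _ := Sigma.subtype_ext (Subtype.ext (Fin.init_snoc (α := fun _ => α) _ _))
    (Fin.snoc_last (α := fun _ => α) _ _)

theorem ncard_chainLifts [IsTrans α lt] [Finite α] {N : β → β → ℕ}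
    (hN : ∀ u w, {v | lt u v ∧ z v = w}.ncard = N (z u) w) (g : Fin (n + 1) → β)
    (hg : g 0 = z b) :
    (chainLifts lt z b g).ncard = ∏ i : Fin n, N (g i.castSucc) (g i.succ) := by
  induction n with
  | zero => simp [chainLifts_zero g hg]
  | succ n ih =>
    cases g using Fin.snocCases with
    | snoc g w =>
      have := Fintype.ofFinite (chainLifts lt z b g)
      have last_eq (f : chainLifts lt z b g) : z (f.1 (Fin.last n)) = g (Fin.last n) :=
        congrFun f.2.2.2 _
      rw [Fin.snoc_apply_zero] at hg
      calc (chainLifts lt z b (Fin.snoc g w : Fin (n + 2) → β)).ncard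
        _ = ∑ f : chainLifts lt z b g, {v | lt (f.1 (Fin.last n)) v ∧ z v = w}.ncard := by
          simp only [← Nat.card_coe_set_eq, Nat.card_congr (chainLiftsSnocEquiv lt z b g w),
            Nat.card_sigma]
        _ = (chainLifts lt z b g).ncard * N (g (Fin.last n)) w := by
          simp only [hN, last_eq, Finset.sum_const, Finset.card_univ, smul_eq_mul,
            Fintype.card_eq_nat_card, Nat.card_coe_set_eq]
        _ = _ := by
          simp only [ih g hg, Fin.prod_univ_castSucc, Fin.snoc_castSucc, Fin.succ_castSucc,
            Fin.succ_last, Fin.snoc_last]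

end ChainLifts

section MultPsi

theorem finsum_mem_comp_eq_finsum_ncard_smul {ι κ M : Type*} [AddCommMonoid M] {s : Set ι}
    (hs : s.Finite) (φ : ι → κ) (F : κ → M) :
    ∑ᶠ i ∈ s, F (φ i) = ∑ᶠ k, {i ∈ s | φ i = k}.ncard • F k := by
  classical
  have ncard_fiber (k : κ) : {i ∈ s | φ i = k}.ncard = {i ∈ hs.toFinset | φ i = k}.card := by
    rw [← Set.ncard_coe_finset]
    simp
  rw [finsum_mem_eq_finite_toFinset_sum _ hs, Finset.sum_comp F φ]
  simp only [ncard_fiber]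
  refine (finsum_eq_sum_of_support_subset _ fun k hk => ?_).symm
  obtain ⟨i, hi⟩ : {i ∈ hs.toFinset | φ i = k}.Nonempty :=
    Finset.card_ne_zero.1 fun h => hk (by simp only [h, zero_smul])
  obtain ⟨his, rfl⟩ := Finset.mem_filter.1 hi
  exact Finset.mem_coe.2 (Finset.mem_image_of_mem φ his)

variable (R : Type) [CommRing R]

/-- The `ab`-index with multiplicities: every sequence `b = g₀, …, gₙ = t` contributes its weight
`∏ᵢ N(gᵢ₋₁, gᵢ)` times.  It computes the `ab`-index of a poset from its image under a map whose
fibers above every element are counted by `N`. -/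
def multPsi {β : Type} (N : β → β → ℕ) (r : β → ℕ) (b t : β) : AB R :=
  ∑ᶠ (n : ℕ) (g : Fin (n + 1) → β) (_ : g 0 = b ∧ g (Fin.last n) = t),
    (∏ i : Fin n, N (g i.castSucc) (g i.succ)) • chainWt R r g

theorem psiRel_eq_multPsi {α β : Type} [Finite α] {lt : α → α → Prop} [IsTrans α lt] {z : α → β}
    {N : β → β → ℕ} (hN : ∀ u w, {v | lt u v ∧ z v = w}.ncard = N (z u) w)
    (r : β → ℕ) (b : α) {t : α} (ht : ∀ v, z v = z t → v = t) :
    PsiRel R lt (r ∘ z) b t = multPsi R N r (z b) (z t) := by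
  classical
  refine finsum_congr fun n => ?_
  let chains : Set (Fin (n + 1) → α) := {f | IsStrictChain lt f ∧ f 0 = b ∧ f (Fin.last n) = t}
  refine (finsum_mem_comp_eq_finsum_ncard_smul chains.toFinite (z ∘ ·) (chainWt R r)).trans
    (finsum_congr fun g => ?_)
  rw [finsum_eq_if]
  split_ifs with hg
  · have fiber_eq : {f ∈ chains | z ∘ f = g} = chainLifts lt z b g := by
      ext f
      refine ⟨fun ⟨hf, hfg⟩ => ⟨hf.1, hf.2.1, hfg⟩, fun ⟨hf, hfb, hfg⟩ => ⟨⟨hf, hfb, ht _ ?_⟩, hfg⟩⟩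
      rw [← hg.2, ← hfg, Function.comp_apply]
    rw [fiber_eq, ncard_chainLifts hN g hg.1]
  · have fiber_eq : {f ∈ chains | z ∘ f = g} = ∅ := by
      refine Set.eq_empty_of_forall_notMem fun f ⟨⟨_, hfb, hft⟩, hfg⟩ => hg ?_
      simp only [← hfg, Function.comp_apply, hfb, hft, and_self]
    rw [fiber_eq, Set.ncard_empty, zero_smul]

end MultPsi

section TchebyshevProjection

variable {α : Type} [PartialOrder α] {γ : Type} {lt : γ → γ → Prop} {t : γ} {z : γ → WithTop α}

/-- The projection `z` to `P ∪ {2̂}` of a poset with order `lt` and maximum `t` has the enumerative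
properties of the projection of `T(P)`: only `t` lies over `2̂`, and above an element over `y` there
are as many elements over `w` as there are in the interval `[y, w]` of `P`. -/
structure IsTchebyshevProjection (lt : γ → γ → Prop) (t : γ) (z : γ → WithTop α) : Prop where
  map_lt_map : ∀ {u v}, lt u v → z u < z v
  eq_top_iff : ∀ {v}, z v = ⊤ ↔ v = t
  lt_max : ∀ {u}, u ≠ t → lt u t
  ncard_fiber : ∀ {u} {y w : α}, z u = y → y < w →
    {v | lt u v ∧ z v = w}.ncard = intervalCard α y w

open Classical in
variable (α) in
/-- The number of elements over `w` above an element over `y`, for a projection as in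
`IsTchebyshevProjection`. -/
def liftCount (y w : WithTop α) : ℕ :=
  if y < w then if w = ⊤ then 1 else intervalCard α y w else 0

namespace IsTchebyshevProjection

theorem ncard_setOf_lt (hz : IsTchebyshevProjection lt t z) (u : γ) (w : WithTop α) :
    {v | lt u v ∧ z v = w}.ncard = liftCount α (z u) w := by
  unfold liftCount
  split_ifs with huw hw
  · have hut : u ≠ t := fun h => huw.ne_top (hz.eq_top_iff.2 h)
    have fiber_eq : {v | lt u v ∧ z v = w} = {t} := by
      ext v
      simp only [hw, hz.eq_top_iff, Set.mem_ofPred_eq, Set.mem_singleton_iff, and_iff_right_iff_imp]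
      rintro rfl
      exact hz.lt_max hut
    rw [fiber_eq, Set.ncard_singleton]
  · obtain ⟨y, hy⟩ := WithTop.ne_top_iff_exists.1 huw.ne_top
    lift w to α using hw
    rw [← hy] at huw ⊢
    exact hz.ncard_fiber hy.symm (WithTop.coe_lt_coe.1 huw)
  · have fiber_eq : {v | lt u v ∧ z v = w} = ∅ :=
      Set.eq_empty_of_forall_notMem fun v ⟨huv, hvw⟩ => huw (hvw ▸ hz.map_lt_map huv)
    rw [fiber_eq, Set.ncard_empty]

protected theorem psiRel_eq_multPsi (R : Type) [CommRing R] [Finite γ] [IsTrans γ lt]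
    (hz : IsTchebyshevProjection lt t z) (r : WithTop α → ℕ) (b : γ) :
    PsiRel R lt (r ∘ z) b t = multPsi R (liftCount α) r (z b) ⊤ := by
  have hzt : z t = ⊤ := hz.eq_top_iff.2 rfl
  rw [psiRel_eq_multPsi R hz.ncard_setOf_lt r b fun v hv => hz.eq_top_iff.1 (hv.trans hzt),
    hzt]

end IsTchebyshevProjection

end TchebyshevProjection

section TchebyshevTransform

variable {α : Type} [PartialOrder α]

instance inst_s7 [Finite α] : Finite (TP α) :=
  inferInstanceAs (Finite (Option {p : WithBot α × α // p.1 < (p.2 : WithBot α)}))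

theorem intervalCard_coe_coe (y w : α) : intervalCard α y w = (Set.Icc y w).ncard := by
  simp only [intervalCard, WithTop.coe_le_coe]
  rfl

theorem zmap_eq_top_iff {v : TP α} : zmap α v = ⊤ ↔ v = none := by
  cases v with
  | none => exact iff_of_true rfl rfl
  | some p => exact iff_of_false WithTop.coe_ne_top (Option.some_ne_none p)

variable [BoundedOrder α]

instance inst_s7_2 : IsTrans (TP α) (TPlt α) :=
  inferInstanceAs (IsTrans _ (Relation.TransGen _))

/-- The strict order that the cover relation of `T(P)` generates, in closed form. -/
def ExplicitTPlt : TP α → TP α → Prop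
  | some p, some q => p.1.2 < q.1.2 ∧ (q.1.1 = p.1.1 ∨ (p.1.2 : WithBot α) ≤ q.1.1)
  | some _, none => True
  | none, _ => False

instance : IsTrans (TP α) ExplicitTPlt where
  trans
    | none, _, _, h, _ => h
    | some _, none, _, _, h => h.elim
    | some _, some _, none, _, _ => trivial
    | some _, some _, some _, ⟨hpq, hpq'⟩, ⟨hqr, hqr'⟩ => by
      refine ⟨hpq.trans hqr, ?_⟩
      rcases hqr' with hqr' | hqr'
      · exact hqr' ▸ hpq'
      · exact Or.inr ((WithBot.coe_le_coe.2 hpq.le).trans hqr')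

theorem TPcov.explicitTPlt {u v : TP α} : TPcov α u v → ExplicitTPlt u v
  | .up _ _ hyw => ⟨hyw.lt, Or.inr le_rfl⟩
  | .same _ _ hyw => ⟨hyw.lt, Or.inl rfl⟩
  | .top _ => trivial

theorem explicitTPlt_of_tPlt {u v : TP α} (huv : TPlt α u v) : ExplicitTPlt u v :=
  Relation.transGen_minimal (r' := ExplicitTPlt) (fun _ _ => TPcov.explicitTPlt) u v huv

theorem zmap_lt_zmap_s7 {u v : TP α} (huv : TPlt α u v) : zmap α u < zmap α v := by
  match u, v, explicitTPlt_of_tPlt huv with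
  | some _, none, _ => exact WithTop.coe_lt_top _
  | some _, some _, h => exact WithTop.coe_lt_coe.2 h.1

section LocallyFinite

variable [LocallyFiniteOrder α]

theorem tPle_of_le {x : WithBot α} {y w : α} (hxy : x < y) (hyw : y ≤ w) :
    TPle α (some ⟨(x, y), hxy⟩) (some ⟨(x, w), hxy.trans_le (WithBot.coe_le_coe.2 hyw)⟩) := by
  induction le_iff_reflTransGen_covBy.1 hyw with
  | refl => exact .refl
  | tail hyc hcw ih => exact (ih (le_iff_reflTransGen_covBy.2 hyc)).tail (.same _ _ hcw)

theorem tPlt_same {x : WithBot α} {y w : α} (hxy : x < y) (hxw : x < w) (hyw : y < w) :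
    TPlt α (some ⟨(x, y), hxy⟩) (some ⟨(x, w), hxw⟩) := by
  obtain ⟨c, hyc, hcw⟩ := exists_covBy_le_of_lt hyw
  have hxc : x < c := hxy.trans (WithBot.coe_lt_coe.2 hyc.lt)
  exact .head' (.same hxy hxc hyc) (tPle_of_le hxc hcw)

theorem tPlt_up {x : WithBot α} {y w : α} (hxy : x < y) (hyw' : (y : WithBot α) < w)
    (hyw : y < w) : TPlt α (some ⟨(x, y), hxy⟩) (some ⟨(y, w), hyw'⟩) := by
  obtain ⟨c, hyc, hcw⟩ := exists_covBy_le_of_lt hyw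
  have hyc' : (y : WithBot α) < c := WithBot.coe_lt_coe.2 hyc.lt
  exact .head' (.up hxy hyc' hyc) (tPle_of_le hyc' hcw)

theorem tPlt_none (p : TPel α) : TPlt α (some p) none :=
  .tail' (tPle_of_le p.2 le_top) (.top _)

theorem tPlt_iff_explicitTPlt {u v : TP α} : TPlt α u v ↔ ExplicitTPlt u v := by
  refine ⟨explicitTPlt_of_tPlt, fun h => ?_⟩
  match u, v, h with
  | some p, none, _ => exact tPlt_none p
  | some ⟨(x, y), hxy⟩, some ⟨(_, w), hxw⟩, ⟨hyw, Or.inl rfl⟩ => exact tPlt_same hxy hxw hyw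
  | some ⟨(x, y), hxy⟩, some ⟨((x' : α), w), hxw⟩, ⟨_, Or.inr hyx⟩ =>
    exact .trans_right (tPle_of_le hxy (WithBot.coe_le_coe.1 hyx))
      (tPlt_up _ hxw (WithBot.coe_lt_coe.1 hxw))

theorem tPlt_coe_iff {p q : TPel α} :
    TPlt α (some p) (some q) ↔
      p.1.2 < q.1.2 ∧ (q.1.1 = p.1.1 ∨ (p.1.2 : WithBot α) ≤ q.1.1) :=
  tPlt_iff_explicitTPlt

/-- Over `w`, the elements above `[x, y]` are `[x, w]` and the `[x', w]` with `y ≤ x' < w`. -/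
theorem ncard_tPlt_fiber (p : TPel α) {w : α} (hw : p.1.2 < w) :
    {v | TPlt α (some p) v ∧ zmap α v = w}.ncard = intervalCard α p.1.2 w := by
  obtain ⟨⟨x, y⟩, hxy : x < y⟩ := p
  have hxw : x < w := hxy.trans (WithBot.coe_lt_coe.2 hw)
  let starts : Set (WithBot α) := insert x (Set.Ico ↑y ↑w)
  have lt_of_mem {x'} (hx' : x' ∈ starts) : x' < w := hx'.elim (fun h => h ▸ hxw) And.right
  calc {v | TPlt α (some ⟨(x, y), hxy⟩) v ∧ zmap α v = w}.ncard
    _ = starts.ncard := by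
      refine (Set.ncard_congr (fun x' hx' => some ⟨(x', w), lt_of_mem hx'⟩) ?_ ?_ ?_).symm
      · exact fun x' hx' => ⟨tPlt_coe_iff.2 ⟨hw, hx'.imp_right And.left⟩, rfl⟩
      · exact fun x' x'' _ _ h => congrArg (fun q : TPel α => q.1.1) (Option.some.inj h)
      · rintro (_ | ⟨⟨x', w'⟩, hxw'⟩) ⟨hlt, hz⟩
        · exact (WithTop.top_ne_coe hz).elim
        · obtain rfl : w' = w := WithTop.coe_injective hz
          exact ⟨x', (tPlt_coe_iff.1 hlt).2.imp_right fun hyx => ⟨hyx, hxw'⟩, rfl⟩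
    _ = (Set.Ico y w).ncard + 1 := by
      have hx : x ∉ Set.Ico (y : WithBot α) w := fun hx => hx.1.not_gt hxy
      rw [Set.ncard_insert_of_notMem hx, ← WithBot.image_coe_Ico,
        Set.ncard_image_of_injective _ WithBot.coe_injective]
    _ = (Set.Icc y w).ncard := by
      rw [← Set.Ico_insert_right hw.le, Set.ncard_insert_of_notMem Set.right_notMem_Ico]
    _ = intervalCard α y w := (intervalCard_coe_coe y w).symm

theorem isTchebyshevProjection_zmap : IsTchebyshevProjection (TPlt α) (TPtop α) (zmap α) where
  map_lt_map := zmap_lt_zmap_s7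
  eq_top_iff := zmap_eq_top_iff
  lt_max {u} hu := match u with
    | none => (hu rfl).elim
    | some p => tPlt_none p
  ncard_fiber {u} _ _ hy hyw := match u with
    | none => (WithTop.top_ne_coe hy).elim
    | some p => WithTop.coe_injective hy ▸ ncard_tPlt_fiber p (WithTop.coe_injective hy ▸ hyw)

end LocallyFinite

end TchebyshevTransform

section Crosspolytope

variable {n : ℕ} {f g : CrossEl n} {s w : Finset (Fin n)}

instance : Finite (CrossEl n) := inferInstanceAs (Finite (Fin n → Option Bool))

namespace CrossEl

/-- The set `S` of a face `(S, ε)`. -/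
def support (f : CrossEl n) : Finset (Fin n) := Finset.univ.filter fun i => (f i).isSome

theorem mem_support {i : Fin n} : i ∈ f.support ↔ (f i).isSome := by
  simp only [support, Finset.mem_filter, Finset.mem_univ, true_and]

theorem notMem_support {i : Fin n} : i ∉ f.support ↔ f i = none := by
  rw [mem_support, Option.not_isSome_iff_eq_none]

theorem le_iff_forall_mem_support : f ≤ g ↔ ∀ i ∈ f.support, g i = f i := by
  refine ⟨fun h i hi => ?_, fun h i s hs => ?_⟩
  · obtain ⟨s, hs⟩ := Option.isSome_iff_exists.1 (mem_support.1 hi)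
    exact (h i s hs).trans hs.symm
  · exact (h i (mem_support.2 (Option.isSome_of_eq_some hs))).trans hs

theorem support_strictMono : StrictMono (support : CrossEl n → Finset (Fin n)) := by
  intro f g hfg
  have hle := le_iff_forall_mem_support.1 hfg.le
  refine lt_of_le_of_ne (fun i hi => ?_) fun hs => hfg.ne (funext fun i => ?_)
  · exact mem_support.2 ((congrArg Option.isSome (hle i hi)).trans (mem_support.1 hi))
  · by_cases hi : i ∈ f.support
    · exact (hle i hi).symm
    · exact (notMem_support.1 hi).trans (notMem_support.1 (hs ▸ hi)).symm

/-- The face over `w` that agrees with `f` on the support of `f` and is elsewhere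
positive exactly on `s`. -/
def extend (f : CrossEl n) (w s : Finset (Fin n)) : CrossEl n := fun i =>
  if i ∈ f.support then f i else if i ∈ w then some (decide (i ∈ s)) else none

theorem extend_of_mem_support {i : Fin n} (hi : i ∈ f.support) : f.extend w s i = f i :=
  if_pos hi

theorem extend_of_notMem_support {i : Fin n} (hi : i ∉ f.support) (hw : i ∈ w) :
    f.extend w s i = some (decide (i ∈ s)) := by
  rw [extend, if_neg hi, if_pos hw]

theorem le_extend : f ≤ f.extend w s :=
  le_iff_forall_mem_support.2 fun _ => extend_of_mem_support

theorem support_extend (hw : f.support ≤ w) : (f.extend w s).support = w := by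
  ext i
  rw [mem_support]
  by_cases hi : i ∈ f.support
  · simpa only [extend_of_mem_support hi, hw hi, iff_true] using mem_support.1 hi
  · simp only [extend, hi, if_false]
    split_ifs with hiw <;> simp [hiw]

theorem extend_injOn : Set.InjOn (f.extend w) (Set.Icc f.support w) := by
  intro s hs s' hs' h
  ext i
  by_cases hi : i ∈ f.support
  · exact iff_of_true (hs.1 hi) (hs'.1 hi)
  by_cases hiw : i ∈ w
  · have := congrFun h i
    simpa only [extend_of_notMem_support hi hiw, Option.some.injEq, decide_eq_decide] using this
  · exact iff_of_false (fun h => hiw (hs.2 h)) fun h => hiw (hs'.2 h)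

theorem exists_extend_eq (hfg : f ≤ g) :
    ∃ s ∈ Set.Icc f.support g.support, f.extend g.support s = g := by
  classical
  let positive : Finset (Fin n) := Finset.univ.filter fun i => g i = some true
  refine ⟨f.support ∪ positive, ⟨Finset.subset_union_left, ?_⟩, funext fun i => ?_⟩
  · exact Finset.union_subset (support_strictMono.monotone hfg) fun i hi =>
      mem_support.2 (Option.isSome_of_eq_some (Finset.mem_filter.1 hi).2)
  · by_cases hi : i ∈ f.support
    · exact (extend_of_mem_support hi).trans (le_iff_forall_mem_support.1 hfg i hi).symm
    by_cases hig : i ∈ g.support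
    · obtain ⟨b, hb⟩ := Option.isSome_iff_exists.1 (mem_support.1 hig)
      refine (extend_of_notMem_support hi hig).trans (Eq.trans ?_ hb.symm)
      cases b <;> simp [positive, hi, hb]
    · exact ((if_neg hi).trans (if_neg hig)).trans (notMem_support.1 hig).symm

theorem bijOn_extend (hw : f.support < w) :
    Set.BijOn (f.extend w) (Set.Icc f.support w) {v | f < v ∧ v.support = w} := by
  refine ⟨fun s _ => ⟨?_, support_extend hw.le⟩, extend_injOn, ?_⟩
  · exact lt_of_le_of_ne le_extend fun h =>
      hw.ne ((congrArg support h).trans (support_extend hw.le))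
  · rintro v ⟨hfv, rfl⟩
    exact exists_extend_eq hfv.le

end CrossEl

theorem ncard_cross_fiber (hw : f.support < w) :
    {v : Cross n | (f : Cross n) < v ∧ v.map CrossEl.support = w}.ncard =
      intervalCard (Finset (Fin n)) f.support w := by
  have fiber_eq : {v : Cross n | (f : Cross n) < v ∧ v.map CrossEl.support = w} =
      WithTop.some '' {v | f < v ∧ v.support = w} := by
    ext v
    cases v using WithTop.recTopCoe <;> simp
  rw [fiber_eq, Set.ncard_image_of_injective _ WithTop.coe_injective,
    ← (CrossEl.bijOn_extend hw).ncard_eq, intervalCard_coe_coe]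

variable (n) in
theorem isTchebyshevProjection_cross :
    IsTchebyshevProjection (· < ·) (crossTop n) (WithTop.map CrossEl.support) where
  map_lt_map h := WithTop.strictMono_map_iff.2 CrossEl.support_strictMono h
  eq_top_iff := WithTop.map_eq_top_iff
  lt_max := Ne.lt_top
  ncard_fiber {u} _ _ hy hyw := by
    obtain ⟨f, rfl, rfl⟩ := WithTop.map_eq_some_iff.1 hy
    exact ncard_cross_fiber hyw

end Crosspolytope

theorem tPrk_eq_comp {α : Type} [PartialOrder α] [BoundedOrder α] (rk : α → ℕ) :
    TPrk α rk = (WithTop.recTopCoe (rk ⊤ + 1) rk : WithTop α → ℕ) ∘ zmap α :=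
  funext fun | none => rfl | some _ => rfl

theorem crossRk_eq_comp (n : ℕ) :
    crossRk n = (WithTop.recTopCoe (n + 1) Finset.card : WithTop (Finset (Fin n)) → ℕ) ∘
      WithTop.map CrossEl.support :=
  funext fun | none => rfl | some _ => rfl

theorem tchebyshev_boolean_eq_crosspolytope_general (R : Type) [CommRing R] (n : ℕ) :
    PsiRel R (TPlt (Finset (Fin n))) (TPrk (Finset (Fin n)) fun s => s.card)
        (TPbot (Finset (Fin n))) (TPtop (Finset (Fin n))) =
      PsiRel R (· < ·) (crossRk n) (crossBot n) (crossTop n) := by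
  have bot_eq : zmap (Finset (Fin n)) (TPbot _) = WithTop.map CrossEl.support (crossBot n) := by
    exact congrArg WithTop.some (Finset.filter_false_of_mem fun _ _ => by simp).symm
  rw [tPrk_eq_comp, crossRk_eq_comp, isTchebyshevProjection_zmap.psiRel_eq_multPsi R,
    (isTchebyshevProjection_cross n).psiRel_eq_multPsi R, bot_eq, Finset.top_eq_univ,
    Finset.card_univ, Fintype.card_fin]

theorem tchebyshev_boolean_eq_crosspolytope (n : ℕ) (hn : 1 ≤ n) :
    PsiRel ℤ (TPlt (Finset (Fin n))) (TPrk (Finset (Fin n)) fun s => s.card)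
        (TPbot (Finset (Fin n))) (TPtop (Finset (Fin n))) =
      PsiRel ℤ (· < ·) (crossRk n) (crossBot n) (crossTop n) :=
  tchebyshev_boolean_eq_crosspolytope_general ℤ n

end Tcheb
end
end
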